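/- For all (ℓ₁,b₁), (ℓ₂,b₂) ∈ ℂ² and every natural number n, the odd two-point functions Ψₙ⁻ = θ₁₂ Z₁₂ⁿ and Ψₙ⁺ = θ̄₁₂ Z₁₂ⁿ in the two-site sl(2|1) realization are lowest weight vectors: they are annihilated by the total lowering generators S⁻ = S₁⁻+S₂⁻, V⁻ = V₁⁻+V₂⁻, W⁻ = W₁⁻+W₂⁻, and satisfy S Ψₙ± = (n + ℓ₁ + ℓ₂ + ½) Ψₙ± and B Ψₙ± = (b₁ + b₂ ± ½) Ψₙ±. -/

import Mathlib

/-!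
The operators `mulθ j` and `dθ j` satisfy the canonical anticommutation relations of a Clifford
algebra, and they commute with multiplication by polynomials in `z₁, z₂` and with `∂₁, ∂₂`.
Everything follows from these relations by rewriting each composite operator in normal order
(`θ`'s with increasing index, then derivatives) and comparing coefficients over `ℂ[z₁,z₂]`.

The superdifference `Z₁₂` is translation invariant: multiplication by it commutes with `S⁻`, `V⁻`,
`W⁻` and `B`, and raises the eigenvalue of `S` by one. Since the constant `1` is killed by
`S⁻, V⁻, W⁻` and is an eigenvector of `S` and `B`, induction on `n` makes `Z₁₂ⁿ` a lowest weight
vector of weight `(n + ℓ₁ + ℓ₂, b₁ + b₂)`. The odd differences `θ₁₂` and `θ̄₁₂` commute with `S⁻`,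
anticommute with `V⁻` and `W⁻`, and shift the eigenvalues of `S` and `B` by `½` and `∓½`.
-/


open MvPolynomial

/-! The two-site sl(2|1) realization on `ℂ[z₁,z₂] ⊗ Λ(θ₁,θ̄₁,θ₂,θ̄₂)`.

An element is encoded as a function `Finset (Fin 4) → ℂ[z₁,z₂]`, the value at `s`
being the coefficient of the ordered monomial `∏_{j ∈ s} θⱼ` (with odd generators
`θ₁ = θ_0`, `θ̄₁ = θ_1`, `θ₂ = θ_2`, `θ̄₂ = θ_3`, factors in increasing order). -/

/-- Elements of `ℂ[z₁,z₂] ⊗ Λ(θ₁,θ̄₁,θ₂,θ̄₂)` in components. -/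
abbrev GrassTwo : Type := Finset (Fin 4) → MvPolynomial (Fin 2) ℂ

namespace GrassTwo

/-- Koszul sign `(-1)^{#{k ∈ s : k < j}}`. -/
noncomputable def sgn (j : Fin 4) (s : Finset (Fin 4)) : MvPolynomial (Fin 2) ℂ :=
  (-1) ^ ((s.filter (fun k => k < j)).card)

/-- Left multiplication by the odd generator `θⱼ`. -/
noncomputable def mulθ (j : Fin 4) (f : GrassTwo) : GrassTwo := fun s =>
  if j ∈ s then sgn j s * f (s.erase j) else 0

/-- The left odd derivation `∂_{θⱼ}`. -/
noncomputable def dθ (j : Fin 4) (f : GrassTwo) : GrassTwo := fun s =>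
  if j ∈ s then 0 else sgn j s * f (insert j s)

/-- The even derivative `∂ᵢ = ∂/∂zᵢ`, acting on components. -/
noncomputable def pd (i : Fin 2) (f : GrassTwo) : GrassTwo := fun s => pderiv i (f s)

/-- Multiplication by a polynomial in `z₁, z₂`, acting on components. -/
noncomputable def mulP (p : MvPolynomial (Fin 2) ℂ) (f : GrassTwo) : GrassTwo :=
  fun s => p * f s

/-- The unit element `1`. -/
noncomputable def one : GrassTwo := fun s => if s = ∅ then 1 else 0

/-- Total lowering generator `S⁻ = S₁⁻ + S₂⁻ = -∂₁ - ∂₂`. -/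
noncomputable def Sm (f : GrassTwo) : GrassTwo := -pd 0 f - pd 1 f

/-- Total lowering generator `V⁻ = V₁⁻ + V₂⁻ = ∂_{θ₁} + ½θ̄₁∂₁ + ∂_{θ₂} + ½θ̄₂∂₂`. -/
noncomputable def Vm (f : GrassTwo) : GrassTwo :=
  dθ 0 f + mulP (C (1 / 2)) (mulθ 1 (pd 0 f))
    + dθ 2 f + mulP (C (1 / 2)) (mulθ 3 (pd 1 f))

/-- Total lowering generator `W⁻ = W₁⁻ + W₂⁻ = ∂_{θ̄₁} + ½θ₁∂₁ + ∂_{θ̄₂} + ½θ₂∂₂`. -/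
noncomputable def Wm (f : GrassTwo) : GrassTwo :=
  dθ 1 f + mulP (C (1 / 2)) (mulθ 0 (pd 0 f))
    + dθ 3 f + mulP (C (1 / 2)) (mulθ 2 (pd 1 f))

/-- Total Cartan generator
`S = Σᵢ (zᵢ∂ᵢ + ½θᵢ∂_{θᵢ} + ½θ̄ᵢ∂_{θ̄ᵢ} + ℓᵢ)`. -/
noncomputable def Stot (ℓ₁ ℓ₂ : ℂ) (f : GrassTwo) : GrassTwo :=
  mulP (X 0) (pd 0 f) + mulP (C (1 / 2)) (mulθ 0 (dθ 0 f))
    + mulP (C (1 / 2)) (mulθ 1 (dθ 1 f)) + mulP (C ℓ₁) f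
    + mulP (X 1) (pd 1 f) + mulP (C (1 / 2)) (mulθ 2 (dθ 2 f))
    + mulP (C (1 / 2)) (mulθ 3 (dθ 3 f)) + mulP (C ℓ₂) f

/-- Total Cartan generator `B = Σᵢ (½θ̄ᵢ∂_{θ̄ᵢ} - ½θᵢ∂_{θᵢ} + bᵢ)`. -/
noncomputable def Btot (b₁ b₂ : ℂ) (f : GrassTwo) : GrassTwo :=
  mulP (C (1 / 2)) (mulθ 1 (dθ 1 f)) - mulP (C (1 / 2)) (mulθ 0 (dθ 0 f)) + mulP (C b₁) f
    + mulP (C (1 / 2)) (mulθ 3 (dθ 3 f)) - mulP (C (1 / 2)) (mulθ 2 (dθ 2 f)) + mulP (C b₂) f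

/-- Left multiplication by the superdifference
`Z₁₂ = z₁ - z₂ + ½(θ̄₁θ₂ + θ₁θ̄₂)`. -/
noncomputable def mulZ (f : GrassTwo) : GrassTwo :=
  mulP (X 0 - X 1) f + mulP (C (1 / 2)) (mulθ 1 (mulθ 2 f) + mulθ 0 (mulθ 3 f))

/-- The odd lowest weight vector `Ψₙ⁻ = θ₁₂ Z₁₂ⁿ` (with `θ₁₂ = θ₁ - θ₂`). -/
noncomputable def Ψminus (n : ℕ) : GrassTwo :=
  mulθ 0 (mulZ^[n] one) - mulθ 2 (mulZ^[n] one)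

/-- The odd lowest weight vector `Ψₙ⁺ = θ̄₁₂ Z₁₂ⁿ` (with `θ̄₁₂ = θ̄₁ - θ̄₂`). -/
noncomputable def Ψplus (n : ℕ) : GrassTwo :=
  mulθ 1 (mulZ^[n] one) - mulθ 3 (mulZ^[n] one)

end GrassTwo

namespace GrassTwo

variable (i j : Fin 4) (k : Fin 2) (p : MvPolynomial (Fin 2) ℂ) (f g : GrassTwo)

lemma mulP_eq : mulP p f = p • f := rfl

lemma complex_smul_eq (c : ℂ) : c • f = (C c : MvPolynomial (Fin 2) ℂ) • f := by
  funext s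
  simp [MvPolynomial.smul_eq_C_mul]

/-! ### Linearity -/

lemma mulθ_add : mulθ j (f + g) = mulθ j f + mulθ j g := by
  funext s
  simp only [mulθ, Pi.add_apply]
  split_ifs <;> ring

lemma mulθ_smul : mulθ j (p • f) = p • mulθ j f := by
  funext s
  simp only [mulθ, Pi.smul_apply, smul_eq_mul]
  split_ifs <;> ring

lemma mulθ_zero : mulθ j 0 = 0 := by simpa using mulθ_smul j 0 0

lemma mulθ_neg : mulθ j (-f) = -mulθ j f := by simpa using mulθ_smul j (-1) f

lemma mulθ_sub : mulθ j (f - g) = mulθ j f - mulθ j g := by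
  rw [sub_eq_add_neg, mulθ_add, mulθ_neg, ← sub_eq_add_neg]

lemma dθ_add : dθ j (f + g) = dθ j f + dθ j g := by
  funext s
  simp only [dθ, Pi.add_apply]
  split_ifs <;> ring

lemma dθ_smul : dθ j (p • f) = p • dθ j f := by
  funext s
  simp only [dθ, Pi.smul_apply, smul_eq_mul]
  split_ifs <;> ring

lemma dθ_neg : dθ j (-f) = -dθ j f := by simpa using dθ_smul j (-1) f

lemma dθ_sub : dθ j (f - g) = dθ j f - dθ j g := by
  rw [sub_eq_add_neg, dθ_add, dθ_neg, ← sub_eq_add_neg]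

lemma pd_add : pd k (f + g) = pd k f + pd k g := by
  funext s
  simp [pd]

lemma pd_neg : pd k (-f) = -pd k f := by
  funext s
  simp [pd]

lemma pd_sub : pd k (f - g) = pd k f - pd k g := by
  funext s
  simp [pd]

lemma pd_smul : pd k (p • f) = pderiv k p • f + p • pd k f := by
  funext s
  simp only [pd, Pi.smul_apply, Pi.add_apply, smul_eq_mul, Derivation.leibniz]
  ring

/-! ### Canonical (anti)commutation relations -/

lemma sgn_mul_self (s : Finset (Fin 4)) : sgn j s * sgn j s = 1 := by
  rw [sgn, ← mul_pow]
  simp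

lemma sgn_erase_self (s : Finset (Fin 4)) : sgn j (s.erase j) = sgn j s := by
  simp only [sgn, Finset.filter_erase]
  rw [Finset.erase_eq_of_notMem (by simp)]

lemma sgn_insert_self (s : Finset (Fin 4)) : sgn j (insert j s) = sgn j s := by
  simp [sgn, Finset.filter_insert]

/-- Adjoining a generator `θᵢ` flips the Koszul sign of `θⱼ` exactly when `i < j`. -/
lemma sgn_insert {s : Finset (Fin 4)} (hi : i ∉ s) :
    sgn j (insert i s) = if i < j then -sgn j s else sgn j s := by
  unfold sgn
  rw [Finset.filter_insert]
  split_ifs with h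
  · rw [Finset.card_insert_of_notMem (by simp [hi]), pow_succ]
    ring
  · rfl

lemma sgn_erase {s : Finset (Fin 4)} (hi : i ∈ s) :
    sgn j (s.erase i) = if i < j then -sgn j s else sgn j s := by
  have h := sgn_insert i j (Finset.notMem_erase i s)
  rw [Finset.insert_erase hi] at h
  rw [h]
  split_ifs <;> simp

variable {i j} in
lemma mulθ_mulθ (h : i < j) : mulθ j (mulθ i f) = -mulθ i (mulθ j f) := by
  funext s
  have h' : ¬ j < i := h.not_gt
  by_cases hi : i ∈ s <;> by_cases hj : j ∈ s <;>
    simp [mulθ, hi, hj, h, h', h.ne, h.ne', sgn_erase, Finset.erase_right_comm (a := j)]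
  ring

lemma mulθ_self : mulθ j (mulθ j f) = 0 := by
  funext s
  simp [mulθ]

lemma dθ_mulθ_self : dθ j (mulθ j f) = f - mulθ j (dθ j f) := by
  funext s
  by_cases hj : j ∈ s
  · simp [mulθ, dθ, hj, sgn_erase_self, ← mul_assoc, sgn_mul_self]
  · simp [mulθ, dθ, hj, sgn_insert_self, ← mul_assoc, sgn_mul_self]

variable {i j} in
lemma dθ_mulθ (h : i ≠ j) : dθ i (mulθ j f) = -mulθ j (dθ i f) := by
  funext s
  by_cases hi : i ∈ s <;> by_cases hj : j ∈ s <;>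
    simp [mulθ, dθ, hi, hj, h, h.symm, sgn_erase, sgn_insert, Finset.erase_insert_of_ne]
  rcases lt_or_gt_of_ne h with h' | h' <;> simp [h', h'.not_gt] <;> ring

lemma pd_mulθ : pd k (mulθ j f) = mulθ j (pd k f) := by
  funext s
  simp only [pd, mulθ]
  split_ifs <;> simp [sgn, Derivation.leibniz, Derivation.leibniz_pow]

lemma dθ_pd : dθ j (pd k f) = pd k (dθ j f) := by
  funext s
  simp only [pd, dθ]
  split_ifs <;> simp [sgn, Derivation.leibniz, Derivation.leibniz_pow]

lemma pd_one : pd k one = 0 := by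
  funext s
  simp only [pd, one]
  split_ifs <;> simp

lemma dθ_one : dθ j one = 0 := by
  funext s
  simp [dθ, one]

lemma sum_halves : (C (1 / 2) + C (1 / 2) : MvPolynomial (Fin 2) ℂ) = 1 := by
  rw [← C_add]
  norm_num

/-! ### Commutation with the superdifferences -/

set_option linter.unusedSimpArgs false

lemma Sm_mulZ : Sm (mulZ f) = mulZ (Sm f) := by
  simp (discharger := decide) only [Sm, mulZ, mulP_eq, mulθ_add, mulθ_sub, mulθ_neg, mulθ_smul,
    mulθ_zero, dθ_add, dθ_sub, dθ_neg, dθ_smul, pd_add, pd_sub, pd_neg, pd_smul, mulθ_mulθ,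
    mulθ_self, dθ_mulθ_self, dθ_mulθ, pd_mulθ, dθ_pd, pderiv_C, map_sub, pderiv_X_self,
    pderiv_X_of_ne]
  module

lemma Vm_mulZ : Vm (mulZ f) = mulZ (Vm f) := by
  simp (discharger := decide) only [Vm, mulZ, mulP_eq, mulθ_add, mulθ_sub, mulθ_neg, mulθ_smul,
    mulθ_zero, dθ_add, dθ_sub, dθ_neg, dθ_smul, pd_add, pd_sub, pd_neg, pd_smul, mulθ_mulθ,
    mulθ_self, dθ_mulθ_self, dθ_mulθ, pd_mulθ, dθ_pd, pderiv_C, map_sub, pderiv_X_self,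
    pderiv_X_of_ne]
  module

lemma Wm_mulZ : Wm (mulZ f) = mulZ (Wm f) := by
  simp (discharger := decide) only [Wm, mulZ, mulP_eq, mulθ_add, mulθ_sub, mulθ_neg, mulθ_smul,
    mulθ_zero, dθ_add, dθ_sub, dθ_neg, dθ_smul, pd_add, pd_sub, pd_neg, pd_smul, mulθ_mulθ,
    mulθ_self, dθ_mulθ_self, dθ_mulθ, pd_mulθ, dθ_pd, pderiv_C, map_sub, pderiv_X_self,
    pderiv_X_of_ne]
  module

/-- Multiplication by `Z₁₂` raises the weight by one: the even part does so through `zᵢ∂ᵢ`, while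
each odd bilinear gains `½` from each of its two factors, whence the use of `½ + ½ = 1`. -/
lemma Stot_mulZ (ℓ₁ ℓ₂ : ℂ) : Stot ℓ₁ ℓ₂ (mulZ f) = mulZ (Stot ℓ₁ ℓ₂ f) + mulZ f := by
  simp (discharger := decide) only [Stot, mulZ, mulP_eq, mulθ_add, mulθ_sub, mulθ_neg, mulθ_smul,
    mulθ_zero, dθ_add, dθ_sub, dθ_neg, dθ_smul, pd_add, pd_sub, pd_neg, pd_smul, mulθ_mulθ,
    mulθ_self, dθ_mulθ_self, dθ_mulθ, pd_mulθ, dθ_pd, pderiv_C, map_sub, pderiv_X_self,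
    pderiv_X_of_ne]
  linear_combination (norm := module)
    sum_halves • ((C (1 / 2) : MvPolynomial (Fin 2) ℂ) • (mulθ 0 (mulθ 3 f) + mulθ 1 (mulθ 2 f)))

lemma Btot_mulZ (b₁ b₂ : ℂ) : Btot b₁ b₂ (mulZ f) = mulZ (Btot b₁ b₂ f) := by
  simp (discharger := decide) only [Btot, mulZ, mulP_eq, mulθ_add, mulθ_sub, mulθ_neg, mulθ_smul,
    mulθ_zero, dθ_add, dθ_sub, dθ_neg, dθ_smul, pd_add, pd_sub, pd_neg, pd_smul, mulθ_mulθ,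
    mulθ_self, dθ_mulθ_self, dθ_mulθ, pd_mulθ, dθ_pd, pderiv_C, map_sub, pderiv_X_self,
    pderiv_X_of_ne]
  module

lemma Sm_theta : Sm (mulθ 0 f - mulθ 2 f) = (mulθ 0 (Sm f) - mulθ 2 (Sm f)) := by
  simp (discharger := decide) only [Sm, mulP_eq, mulθ_add, mulθ_sub, mulθ_neg, mulθ_smul,
    mulθ_zero, dθ_add, dθ_sub, dθ_neg, dθ_smul, pd_add, pd_sub, pd_neg, pd_smul, mulθ_mulθ,
    mulθ_self, dθ_mulθ_self, dθ_mulθ, pd_mulθ, dθ_pd, pderiv_C, map_sub, pderiv_X_self,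
    pderiv_X_of_ne]
  module

lemma Vm_theta : Vm (mulθ 0 f - mulθ 2 f) = -(mulθ 0 (Vm f) - mulθ 2 (Vm f)) := by
  simp (discharger := decide) only [Vm, mulP_eq, mulθ_add, mulθ_sub, mulθ_neg, mulθ_smul,
    mulθ_zero, dθ_add, dθ_sub, dθ_neg, dθ_smul, pd_add, pd_sub, pd_neg, pd_smul, mulθ_mulθ,
    mulθ_self, dθ_mulθ_self, dθ_mulθ, pd_mulθ, dθ_pd, pderiv_C, map_sub, pderiv_X_self,
    pderiv_X_of_ne]
  module

lemma Wm_theta : Wm (mulθ 0 f - mulθ 2 f) = -(mulθ 0 (Wm f) - mulθ 2 (Wm f)) := by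
  simp (discharger := decide) only [Wm, mulP_eq, mulθ_add, mulθ_sub, mulθ_neg, mulθ_smul,
    mulθ_zero, dθ_add, dθ_sub, dθ_neg, dθ_smul, pd_add, pd_sub, pd_neg, pd_smul, mulθ_mulθ,
    mulθ_self, dθ_mulθ_self, dθ_mulθ, pd_mulθ, dθ_pd, pderiv_C, map_sub, pderiv_X_self,
    pderiv_X_of_ne]
  module

lemma Stot_theta (ℓ₁ ℓ₂ : ℂ) : Stot ℓ₁ ℓ₂ (mulθ 0 f - mulθ 2 f) =
    (mulθ 0 (Stot ℓ₁ ℓ₂ f) - mulθ 2 (Stot ℓ₁ ℓ₂ f))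
      + (C (1 / 2) : MvPolynomial (Fin 2) ℂ) • (mulθ 0 f - mulθ 2 f) := by
  simp (discharger := decide) only [Stot, mulP_eq, mulθ_add, mulθ_sub, mulθ_neg, mulθ_smul,
    mulθ_zero, dθ_add, dθ_sub, dθ_neg, dθ_smul, pd_add, pd_sub, pd_neg, pd_smul, mulθ_mulθ,
    mulθ_self, dθ_mulθ_self, dθ_mulθ, pd_mulθ, dθ_pd, pderiv_C, map_sub, pderiv_X_self,
    pderiv_X_of_ne]
  module

lemma Btot_theta (b₁ b₂ : ℂ) : Btot b₁ b₂ (mulθ 0 f - mulθ 2 f) =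
    (mulθ 0 (Btot b₁ b₂ f) - mulθ 2 (Btot b₁ b₂ f))
      - (C (1 / 2) : MvPolynomial (Fin 2) ℂ) • (mulθ 0 f - mulθ 2 f) := by
  simp (discharger := decide) only [Btot, mulP_eq, mulθ_add, mulθ_sub, mulθ_neg, mulθ_smul,
    mulθ_zero, dθ_add, dθ_sub, dθ_neg, dθ_smul, pd_add, pd_sub, pd_neg, pd_smul, mulθ_mulθ,
    mulθ_self, dθ_mulθ_self, dθ_mulθ, pd_mulθ, dθ_pd, pderiv_C, map_sub, pderiv_X_self,
    pderiv_X_of_ne]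
  module

lemma Sm_thetabar : Sm (mulθ 1 f - mulθ 3 f) = (mulθ 1 (Sm f) - mulθ 3 (Sm f)) := by
  simp (discharger := decide) only [Sm, mulP_eq, mulθ_add, mulθ_sub, mulθ_neg, mulθ_smul,
    mulθ_zero, dθ_add, dθ_sub, dθ_neg, dθ_smul, pd_add, pd_sub, pd_neg, pd_smul, mulθ_mulθ,
    mulθ_self, dθ_mulθ_self, dθ_mulθ, pd_mulθ, dθ_pd, pderiv_C, map_sub, pderiv_X_self,
    pderiv_X_of_ne]
  module

lemma Vm_thetabar : Vm (mulθ 1 f - mulθ 3 f) = -(mulθ 1 (Vm f) - mulθ 3 (Vm f)) := by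
  simp (discharger := decide) only [Vm, mulP_eq, mulθ_add, mulθ_sub, mulθ_neg, mulθ_smul,
    mulθ_zero, dθ_add, dθ_sub, dθ_neg, dθ_smul, pd_add, pd_sub, pd_neg, pd_smul, mulθ_mulθ,
    mulθ_self, dθ_mulθ_self, dθ_mulθ, pd_mulθ, dθ_pd, pderiv_C, map_sub, pderiv_X_self,
    pderiv_X_of_ne]
  module

lemma Wm_thetabar : Wm (mulθ 1 f - mulθ 3 f) = -(mulθ 1 (Wm f) - mulθ 3 (Wm f)) := by
  simp (discharger := decide) only [Wm, mulP_eq, mulθ_add, mulθ_sub, mulθ_neg, mulθ_smul,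
    mulθ_zero, dθ_add, dθ_sub, dθ_neg, dθ_smul, pd_add, pd_sub, pd_neg, pd_smul, mulθ_mulθ,
    mulθ_self, dθ_mulθ_self, dθ_mulθ, pd_mulθ, dθ_pd, pderiv_C, map_sub, pderiv_X_self,
    pderiv_X_of_ne]
  module

lemma Stot_thetabar (ℓ₁ ℓ₂ : ℂ) : Stot ℓ₁ ℓ₂ (mulθ 1 f - mulθ 3 f) =
    (mulθ 1 (Stot ℓ₁ ℓ₂ f) - mulθ 3 (Stot ℓ₁ ℓ₂ f))
      + (C (1 / 2) : MvPolynomial (Fin 2) ℂ) • (mulθ 1 f - mulθ 3 f) := by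
  simp (discharger := decide) only [Stot, mulP_eq, mulθ_add, mulθ_sub, mulθ_neg, mulθ_smul,
    mulθ_zero, dθ_add, dθ_sub, dθ_neg, dθ_smul, pd_add, pd_sub, pd_neg, pd_smul, mulθ_mulθ,
    mulθ_self, dθ_mulθ_self, dθ_mulθ, pd_mulθ, dθ_pd, pderiv_C, map_sub, pderiv_X_self,
    pderiv_X_of_ne]
  module

lemma Btot_thetabar (b₁ b₂ : ℂ) : Btot b₁ b₂ (mulθ 1 f - mulθ 3 f) =
    (mulθ 1 (Btot b₁ b₂ f) - mulθ 3 (Btot b₁ b₂ f))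
      + (C (1 / 2) : MvPolynomial (Fin 2) ℂ) • (mulθ 1 f - mulθ 3 f) := by
  simp (discharger := decide) only [Btot, mulP_eq, mulθ_add, mulθ_sub, mulθ_neg, mulθ_smul,
    mulθ_zero, dθ_add, dθ_sub, dθ_neg, dθ_smul, pd_add, pd_sub, pd_neg, pd_smul, mulθ_mulθ,
    mulθ_self, dθ_mulθ_self, dθ_mulθ, pd_mulθ, dθ_pd, pderiv_C, map_sub, pderiv_X_self,
    pderiv_X_of_ne]
  module

/-! ### Powers of `Z₁₂` -/

lemma mulZ_smul : mulZ (p • f) = p • mulZ f := by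
  simp only [mulZ, mulP_eq, mulθ_smul]
  module

lemma mulZ_zero : mulZ 0 = 0 := by simpa using mulZ_smul 0 0

lemma Sm_pow (n : ℕ) : Sm (mulZ^[n] one) = 0 := by
  induction n with
  | zero => simp [Sm, pd_one, dθ_one, mulP_eq, mulθ_zero]
  | succ n ih => rw [Function.iterate_succ_apply', Sm_mulZ, ih, mulZ_zero]

lemma Vm_pow (n : ℕ) : Vm (mulZ^[n] one) = 0 := by
  induction n with
  | zero => simp [Vm, pd_one, dθ_one, mulP_eq, mulθ_zero]
  | succ n ih => rw [Function.iterate_succ_apply', Vm_mulZ, ih, mulZ_zero]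

lemma Wm_pow (n : ℕ) : Wm (mulZ^[n] one) = 0 := by
  induction n with
  | zero => simp [Wm, pd_one, dθ_one, mulP_eq, mulθ_zero]
  | succ n ih => rw [Function.iterate_succ_apply', Wm_mulZ, ih, mulZ_zero]

lemma Stot_pow (ℓ₁ ℓ₂ : ℂ) (n : ℕ) : Stot ℓ₁ ℓ₂ (mulZ^[n] one) =
    (C ((n : ℂ) + ℓ₁ + ℓ₂) : MvPolynomial (Fin 2) ℂ) • mulZ^[n] one := by
  induction n with
  | zero => simp [Stot, pd_one, dθ_one, mulP_eq, mulθ_zero, add_smul]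
  | succ n ih =>
    rw [Function.iterate_succ_apply', Stot_mulZ, ih, mulZ_smul]
    simp only [Nat.cast_succ, map_add, map_one]
    module

lemma Btot_pow (b₁ b₂ : ℂ) (n : ℕ) : Btot b₁ b₂ (mulZ^[n] one) =
    (C (b₁ + b₂) : MvPolynomial (Fin 2) ℂ) • mulZ^[n] one := by
  induction n with
  | zero => simp [Btot, dθ_one, mulP_eq, mulθ_zero, add_smul]
  | succ n ih => rw [Function.iterate_succ_apply', Btot_mulZ, ih, mulZ_smul]

end GrassTwo

open GrassTwo in
/-- The odd two-point functions `Ψₙ⁻ = θ₁₂Z₁₂ⁿ` and `Ψₙ⁺ = θ̄₁₂Z₁₂ⁿ` are lowest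
weight vectors of the two-site sl(2|1) realization: they are annihilated by the
total lowering generators `S⁻, V⁻, W⁻` and satisfy
`S Ψₙ± = (n+ℓ₁+ℓ₂+½) Ψₙ±`, `B Ψₙ± = (b₁+b₂±½) Ψₙ±`. -/
theorem sl21_odd_lowest_weight_vectors (ℓ₁ b₁ ℓ₂ b₂ : ℂ) (n : ℕ) :
    (Sm (Ψminus n) = 0 ∧ Vm (Ψminus n) = 0 ∧ Wm (Ψminus n) = 0 ∧
      Stot ℓ₁ ℓ₂ (Ψminus n) = ((n : ℂ) + ℓ₁ + ℓ₂ + 1 / 2) • Ψminus n ∧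
      Btot b₁ b₂ (Ψminus n) = (b₁ + b₂ - 1 / 2) • Ψminus n) ∧
    (Sm (Ψplus n) = 0 ∧ Vm (Ψplus n) = 0 ∧ Wm (Ψplus n) = 0 ∧
      Stot ℓ₁ ℓ₂ (Ψplus n) = ((n : ℂ) + ℓ₁ + ℓ₂ + 1 / 2) • Ψplus n ∧
      Btot b₁ b₂ (Ψplus n) = (b₁ + b₂ + 1 / 2) • Ψplus n) := by
  refine ⟨⟨?_, ?_, ?_, ?_, ?_⟩, ?_, ?_, ?_, ?_, ?_⟩
  · rw [Ψminus, Sm_theta, Sm_pow]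
    simp [mulθ_zero]
  · rw [Ψminus, Vm_theta, Vm_pow]
    simp [mulθ_zero]
  · rw [Ψminus, Wm_theta, Wm_pow]
    simp [mulθ_zero]
  · rw [Ψminus, Stot_theta, Stot_pow, complex_smul_eq]
    simp only [mulθ_smul, map_add]
    module
  · rw [Ψminus, Btot_theta, Btot_pow, complex_smul_eq]
    simp only [mulθ_smul, map_add, map_sub]
    module
  · rw [Ψplus, Sm_thetabar, Sm_pow]
    simp [mulθ_zero]
  · rw [Ψplus, Vm_thetabar, Vm_pow]
    simp [mulθ_zero]
  · rw [Ψplus, Wm_thetabar, Wm_pow]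
    simp [mulθ_zero]
  · rw [Ψplus, Stot_thetabar, Stot_pow, complex_smul_eq]
    simp only [mulθ_smul, map_add]
    module
  · rw [Ψplus, Btot_thetabar, Btot_pow, complex_smul_eq]
    simp only [mulθ_smul, map_add]
    module
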